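/- arXiv:2011.05845 — 6 statements merged into one kernel-verified Lean document; each statement's English description precedes it below -/
import Mathlib

section
/- Let A, B be n×n real symmetric matrices with A ⪰ B ⪰ 0 whose ranges coincide (the column space of A equals the column space of B). If A† and B† are the Moore–Penrose pseudoinverses of A and B respectively, then B† ⪰ A†. -/
/-!
Write `X = A†` and `Y = B†`. Both are symmetric, by uniqueness of the pseudoinverse, so `Y`
commutes with `B`, and `B Y = Y B` is the orthogonal projection onto the range of `B`. Since the
columns of `X` lie in the range of `A`, this projection fixes `X`: `Y B X = X = X B Y`. Hence

  `Y - X = X (A - B) X + (Y - X) B (Y - X)`,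

a sum of two congruences of positive semidefinite matrices.
-/

open Matrix

/-- `X` is the Moore–Penrose pseudoinverse of `A`. -/
def IsMoorePenrose {p q : ℕ} (A : Matrix (Fin p) (Fin q) ℝ) (X : Matrix (Fin q) (Fin p) ℝ) :
    Prop :=
  (X * A)ᵀ = X * A ∧ (A * X)ᵀ = A * X ∧ X * A * X = X ∧ A * X * A = A

theorem IsMoorePenrose.unique {p q : ℕ} {A : Matrix (Fin p) (Fin q) ℝ}
    {X Z : Matrix (Fin q) (Fin p) ℝ} (hX : IsMoorePenrose A X) (hZ : IsMoorePenrose A Z) :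
    X = Z := by
  obtain ⟨hX1, hX2, hX3, hX4⟩ := hX
  obtain ⟨hZ1, hZ2, hZ3, hZ4⟩ := hZ
  have h1 : A * X = A * Z := by
    calc A * X = (A * X)ᵀ := hX2.symm
      _ = ((A * Z) * (A * X))ᵀ := by rw [← Matrix.mul_assoc (A * Z), hZ4]
      _ = (A * X) * (A * Z) := by rw [Matrix.transpose_mul, hX2, hZ2]
      _ = A * Z := by rw [← Matrix.mul_assoc, hX4]
  have h2 : X * A = Z * A := by
    calc X * A = (X * A)ᵀ := hX1.symm
      _ = ((X * A) * (Z * A))ᵀ := by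
        rw [Matrix.mul_assoc X, ← Matrix.mul_assoc A, hZ4]
      _ = (Z * A) * (X * A) := by rw [Matrix.transpose_mul, hX1, hZ1]
      _ = Z * A := by rw [Matrix.mul_assoc, ← Matrix.mul_assoc A, hX4]
  calc X = X * A * X := hX3.symm
    _ = Z * A * Z := by rw [Matrix.mul_assoc, h1, ← Matrix.mul_assoc, h2]
    _ = Z := hZ3

theorem IsMoorePenrose.transpose {p q : ℕ} {A : Matrix (Fin p) (Fin q) ℝ}
    {X : Matrix (Fin q) (Fin p) ℝ} (hX : IsMoorePenrose A X) : IsMoorePenrose Aᵀ Xᵀ := by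
  obtain ⟨h1, h2, h3, h4⟩ := hX
  refine ⟨?_, ?_, ?_, ?_⟩
  · rw [← Matrix.transpose_mul, h2, h2]
  · rw [← Matrix.transpose_mul, h1, h1]
  · rw [← Matrix.transpose_mul, ← Matrix.transpose_mul, ← Matrix.mul_assoc, h3]
  · rw [← Matrix.transpose_mul, ← Matrix.transpose_mul, ← Matrix.mul_assoc, h4]

theorem IsMoorePenrose.transpose_eq {n : ℕ} {A X : Matrix (Fin n) (Fin n) ℝ}
    (hA : Aᵀ = A) (hX : IsMoorePenrose A X) : Xᵀ = X := by
  have h := hX.transpose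
  rw [hA] at h
  exact h.unique hX

theorem IsMoorePenrose.comm {n : ℕ} {A X : Matrix (Fin n) (Fin n) ℝ}
    (hA : Aᵀ = A) (hX : IsMoorePenrose A X) : X * A = A * X := by
  rw [← hX.1, Matrix.transpose_mul, hA, hX.transpose_eq hA]

/-- `B * Y` acts as the identity on the range of `B`, hence on the columns of `A`. -/
theorem IsMoorePenrose.mul_mul_eq_of_range_le {n : ℕ} {A B Y : Matrix (Fin n) (Fin n) ℝ}
    (hY : IsMoorePenrose B Y)
    (h : LinearMap.range A.mulVecLin ≤ LinearMap.range B.mulVecLin) : B * Y * A = A := by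
  refine Matrix.mulVec_injective (funext fun v => ?_)
  obtain ⟨w, hw⟩ := h ⟨v, rfl⟩
  simp only [Matrix.mulVecLin_apply] at hw
  rw [← Matrix.mulVec_mulVec, ← hw, Matrix.mulVec_mulVec, hY.2.2.2]

/-- If `A ⪰ B ⪰ 0` are symmetric matrices with the same range, then their Moore–Penrose
pseudoinverses satisfy `B† ⪰ A†`. -/
theorem pseudoinverse_antitone (n : ℕ) (A B Adag Bdag : Matrix (Fin n) (Fin n) ℝ)
    (hB : B.PosSemidef) (hAB : (A - B).PosSemidef)
    (hran : LinearMap.range A.mulVecLin = LinearMap.range B.mulVecLin)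
    (hAdag : IsMoorePenrose A Adag) (hBdag : IsMoorePenrose B Bdag) :
    (Bdag - Adag).PosSemidef := by
  have hBt : Bᵀ = B := by simpa using hB.1.eq
  have hAt : Aᵀ = A := by
    have h : (A - B)ᵀ = A - B := by simpa using hAB.1.eq
    rwa [Matrix.transpose_sub, hBt, sub_left_inj] at h
  have hXt := hAdag.transpose_eq hAt
  have hYt := hBdag.transpose_eq hBt
  have hfix : Bdag * B * Adag = Adag := by
    -- `X = X A X = A X X`, so the columns of `X` lie in the range of `A`.
    have hX : A * (Adag * Adag) = Adag := by
      rw [← Matrix.mul_assoc, ← hAdag.comm hAt, hAdag.2.2.1]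
    rw [hBdag.comm hBt, ← hX, ← Matrix.mul_assoc, hBdag.mul_mul_eq_of_range_le hran.le]
  have hfix' : Adag * B * Bdag = Adag := by
    have h := congrArg Matrix.transpose hfix
    rwa [Matrix.transpose_mul, Matrix.transpose_mul, hXt, hYt, hBt, ← Matrix.mul_assoc] at h
  have key : Bdag - Adag =
      Adagᴴ * (A - B) * Adag + (Bdag - Adag)ᴴ * B * (Bdag - Adag) := by
    rw [Matrix.conjTranspose_eq_transpose_of_trivial, Matrix.conjTranspose_eq_transpose_of_trivial,
      Matrix.transpose_sub, hXt, hYt]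
    simp only [Matrix.mul_sub, Matrix.sub_mul, hfix, hfix', hAdag.2.2.1, hBdag.2.2.1]
    abel
  rw [key]
  exact (hAB.conjTranspose_mul_mul_same _).add (hB.conjTranspose_mul_mul_same _)
end

section
/- Let Λ₁ ∈ S^k₊ and Λ₂ ∈ S^m₊ with Moore–Penrose pseudoinverses Λ₁†, Λ₂†. Let X ∈ Sⁿ₊ with Moore–Penrose pseudoinverse X†, and let Y ∈ ℝ^{n×k}, Z ∈ ℝ^{n×m} satisfy range(Yᵀ) ⊆ range(Λ₁), range(Zᵀ) ⊆ range(Λ₂), range(Y) ⊆ range(X) and range(Z) ⊆ range(X). Then the real number (1/2)·(YΛ₁†)·(X†(YΛ₁†)) + (1/2)·(ZΛ₂†)·(X†(ZΛ₂†)) is the least upper bound of the set {X·A + Y·B + Z·C : (A,B,C) ∈ O_Λ}, and this supremum is attained by some element of O_Λ. -/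
/-!
The two blocks `(Y, B, Λ₁)` and `(Z, C, Λ₂)` decouple. Since `X ⪰ 0`, membership in `O_Λ` gives
`X·A ≤ -½ X·(B Λ₁² Bᵀ) - ½ X·(C Λ₂² Cᵀ)`, with equality when the constraint is tight, so it
suffices to maximise `Y·B - ½ X·(B Λ₁² Bᵀ)` over `B`, and likewise for `C`.

The range conditions give `Y = W Λ` and `W = X V`, where `W = Y Λ†` and `V = X† W`. Completing
the square with `E = B Λ - V` yields
`Y·B - ½ X·(B Λ² Bᵀ) = ½ W·(X† W) - ½ tr (Eᵀ X E)`
(`block_identity`). The last term is nonpositive, and it vanishes as soon as `B Λ = V`, an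
equation that is solvable because the rows of `W` lie in the row space of `Λ` (`block_solvable`).
-/

open Matrix

/-- The Frobenius inner product `A · B = trace (Aᵀ * B)` of two real matrices. -/
noncomputable def frobInner {p q : ℕ} (A B : Matrix (Fin p) (Fin q) ℝ) : ℝ :=
  (Aᵀ * B).trace

/-- The constraint set
`O_Λ = {(A,B,C) ∈ Sⁿ × ℝ^{n×k} × ℝ^{n×m} : A + ½·B Λ₁² Bᵀ + ½·C Λ₂² Cᵀ ⪯ 0}`. -/
def OLam (n k m : ℕ) (Λ₁ : Matrix (Fin k) (Fin k) ℝ) (Λ₂ : Matrix (Fin m) (Fin m) ℝ) :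
    Set (Matrix (Fin n) (Fin n) ℝ × Matrix (Fin n) (Fin k) ℝ × Matrix (Fin n) (Fin m) ℝ) :=
  {p | p.1.IsSymm ∧
    (-(p.1 + (1 / 2 : ℝ) • (p.2.1 * Λ₁ ^ 2 * p.2.1ᵀ) +
        (1 / 2 : ℝ) • (p.2.2 * Λ₂ ^ 2 * p.2.2ᵀ))).PosSemidef}

/-- Range inclusion as a matrix factorisation, chosen column by column. -/
lemma exists_mul_eq_of_range_le {p q r : ℕ} (P : Matrix (Fin p) (Fin q) ℝ)
    (Q : Matrix (Fin p) (Fin r) ℝ)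
    (h : LinearMap.range P.mulVecLin ≤ LinearMap.range Q.mulVecLin) :
    ∃ M : Matrix (Fin r) (Fin q) ℝ, P = Q * M := by
  have h1 : ∀ j : Fin q, ∃ v : Fin r → ℝ, Q *ᵥ v = P.col j := by
    intro j
    have hj : P.col j ∈ LinearMap.range P.mulVecLin :=
      ⟨Pi.single j 1, by simp⟩
    obtain ⟨v, hv⟩ := h hj
    exact ⟨v, by simpa using hv⟩
  choose v hv using h1
  refine ⟨Matrix.of fun i j => v j i, ?_⟩
  ext i j
  exact (congrFun (hv j) i).symm

open scoped MatrixOrder in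
lemma trace_mul_nonneg_of_posSemidef {n : ℕ} {X P : Matrix (Fin n) (Fin n) ℝ}
    (hX : X.PosSemidef) (hP : P.PosSemidef) : 0 ≤ (X * P).trace := by
  obtain ⟨R, rfl⟩ := CStarAlgebra.nonneg_iff_eq_star_mul_self.mp hP.nonneg
  rw [Matrix.star_eq_conjTranspose, ← Matrix.mul_assoc, Matrix.trace_mul_comm,
    ← Matrix.mul_assoc]
  exact (hX.mul_mul_conjTranspose_same R).trace_nonneg

/-- Completing the square in one block, with square term centred at `V = X† Y Λ†`. -/
lemma block_identity {n k : ℕ} {Λ Λd : Matrix (Fin k) (Fin k) ℝ} {X Xd : Matrix (Fin n) (Fin n) ℝ}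
    {Y : Matrix (Fin n) (Fin k) ℝ} (hΛ : Λ.PosSemidef) (hX : X.PosSemidef)
    (hΛd : IsMoorePenrose Λ Λd) (hXd : IsMoorePenrose X Xd)
    (hY1 : LinearMap.range (Yᵀ).mulVecLin ≤ LinearMap.range Λ.mulVecLin)
    (hY2 : LinearMap.range Y.mulVecLin ≤ LinearMap.range X.mulVecLin)
    (B : Matrix (Fin n) (Fin k) ℝ) :
    frobInner Y B - (1 / 2) * (X * (B * Λ ^ 2 * Bᵀ)).trace =
      (1 / 2) * frobInner (Y * Λd) (Xd * (Y * Λd)) -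
      (1 / 2) * ((B * Λ - Xd * (Y * Λd))ᵀ * X * (B * Λ - Xd * (Y * Λd))).trace := by
  have hΛs : Λᵀ = Λ := by simpa using hΛ.isHermitian.eq
  have hXs : Xᵀ = X := by simpa using hX.isHermitian.eq
  obtain ⟨M, hM⟩ := exists_mul_eq_of_range_le _ _ hY1
  obtain ⟨N, hN⟩ := exists_mul_eq_of_range_le _ _ hY2
  have hYW : Y * Λd * Λ = Y := by
    have hYM : Y = Mᵀ * Λ := by
      rw [← Matrix.transpose_transpose Y, hM, Matrix.transpose_mul, hΛs]
    rw [hYM, Matrix.mul_assoc, Matrix.mul_assoc, ← Matrix.mul_assoc Λ, hΛd.2.2.2]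
  have hXV : X * (Xd * (Y * Λd)) = Y * Λd := by
    rw [hN, ← Matrix.mul_assoc, ← Matrix.mul_assoc, ← Matrix.mul_assoc, hXd.2.2.2]
  generalize Y * Λd = W at *
  generalize Xd * W = V at *
  subst hXV
  subst hYW
  have e1 : (X * (B * Λ ^ 2 * Bᵀ)).trace = ((B * Λ)ᵀ * X * (B * Λ)).trace := by
    rw [Matrix.trace_mul_comm ((B * Λ)ᵀ * X), Matrix.trace_mul_comm X]
    simp only [Matrix.transpose_mul, hΛs, pow_two, Matrix.mul_assoc]
  have e2 : (Vᵀ * X * (B * Λ)).trace = ((X * V * Λ)ᵀ * B).trace := by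
    rw [← Matrix.mul_assoc, Matrix.trace_mul_comm]
    simp only [Matrix.transpose_mul, hΛs, hXs, Matrix.mul_assoc]
  have e3 : ((B * Λ)ᵀ * X * V).trace = (Vᵀ * X * (B * Λ)).trace := by
    rw [← Matrix.trace_transpose]
    simp only [Matrix.transpose_mul, Matrix.transpose_transpose, hXs, Matrix.mul_assoc]
  have e4 : ((X * V)ᵀ * V) = Vᵀ * X * V := by
    rw [Matrix.transpose_mul, hXs]
  simp only [frobInner]
  rw [e1, e4, Matrix.transpose_sub, Matrix.sub_mul, Matrix.sub_mul, Matrix.mul_sub,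
    Matrix.mul_sub, Matrix.trace_sub, Matrix.trace_sub, Matrix.trace_sub, e3, e2]
  ring

lemma block_solvable {n k : ℕ} {Λ Λd : Matrix (Fin k) (Fin k) ℝ} (Xd : Matrix (Fin n) (Fin n) ℝ)
    {Y : Matrix (Fin n) (Fin k) ℝ} (hΛ : Λ.PosSemidef) (hΛd : IsMoorePenrose Λ Λd)
    (hY1 : LinearMap.range (Yᵀ).mulVecLin ≤ LinearMap.range Λ.mulVecLin) :
    ∃ B : Matrix (Fin n) (Fin k) ℝ, B * Λ = Xd * (Y * Λd) := by
  have hΛs : Λᵀ = Λ := by simpa using hΛ.isHermitian.eq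
  obtain ⟨M, hM⟩ := exists_mul_eq_of_range_le _ _ hY1
  have hYM : Y = Mᵀ * Λ := by
    rw [← Matrix.transpose_transpose Y, hM, Matrix.transpose_mul, hΛs]
  -- Writing `Y = Mᵀ Λ`, symmetry of `Λ Λ†` gives `Y Λ† = Mᵀ Λ Λ† = Mᵀ (Λ†)ᵀ Λ`.
  refine ⟨Xd * (Mᵀ * Λdᵀ), ?_⟩
  rw [hYM, Matrix.mul_assoc Mᵀ Λ, ← hΛd.2.1, Matrix.transpose_mul, hΛs]
  simp only [Matrix.mul_assoc]

/-- Under the range compatibility conditions, the value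
`½ (YΛ₁†)·(X†(YΛ₁†)) + ½ (ZΛ₂†)·(X†(ZΛ₂†))` is the least upper bound of
`{X·A + Y·B + Z·C : (A,B,C) ∈ O_Λ}`, and the supremum is attained. -/
theorem weighted_action_sup_attained (n k m : ℕ)
    (Λ₁ Λ₁d : Matrix (Fin k) (Fin k) ℝ) (Λ₂ Λ₂d : Matrix (Fin m) (Fin m) ℝ)
    (X Xd : Matrix (Fin n) (Fin n) ℝ)
    (Y : Matrix (Fin n) (Fin k) ℝ) (Z : Matrix (Fin n) (Fin m) ℝ)
    (hΛ₁ : Λ₁.PosSemidef) (hΛ₂ : Λ₂.PosSemidef) (hX : X.PosSemidef)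
    (hΛ₁d : IsMoorePenrose Λ₁ Λ₁d) (hΛ₂d : IsMoorePenrose Λ₂ Λ₂d)
    (hXd : IsMoorePenrose X Xd)
    (hY1 : LinearMap.range (Yᵀ).mulVecLin ≤ LinearMap.range Λ₁.mulVecLin)
    (hZ1 : LinearMap.range (Zᵀ).mulVecLin ≤ LinearMap.range Λ₂.mulVecLin)
    (hY2 : LinearMap.range Y.mulVecLin ≤ LinearMap.range X.mulVecLin)
    (hZ2 : LinearMap.range Z.mulVecLin ≤ LinearMap.range X.mulVecLin) :
    IsLUB {r : ℝ | ∃ p ∈ OLam n k m Λ₁ Λ₂,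
        r = frobInner X p.1 + frobInner Y p.2.1 + frobInner Z p.2.2}
      ((1 / 2) * frobInner (Y * Λ₁d) (Xd * (Y * Λ₁d)) +
        (1 / 2) * frobInner (Z * Λ₂d) (Xd * (Z * Λ₂d))) ∧
    ((1 / 2) * frobInner (Y * Λ₁d) (Xd * (Y * Λ₁d)) +
        (1 / 2) * frobInner (Z * Λ₂d) (Xd * (Z * Λ₂d))) ∈
      {r : ℝ | ∃ p ∈ OLam n k m Λ₁ Λ₂,
        r = frobInner X p.1 + frobInner Y p.2.1 + frobInner Z p.2.2} := by
  have hΛ₁s : Λ₁ᵀ = Λ₁ := by simpa using hΛ₁.isHermitian.eq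
  have hΛ₂s : Λ₂ᵀ = Λ₂ := by simpa using hΛ₂.isHermitian.eq
  have hXs : Xᵀ = X := by simpa using hX.isHermitian.eq
  have idY := block_identity hΛ₁ hX hΛ₁d hXd hY1 hY2
  have idZ := block_identity hΛ₂ hX hΛ₂d hXd hZ1 hZ2
  have hmem : ((1 / 2) * frobInner (Y * Λ₁d) (Xd * (Y * Λ₁d)) +
        (1 / 2) * frobInner (Z * Λ₂d) (Xd * (Z * Λ₂d))) ∈
      {r : ℝ | ∃ p ∈ OLam n k m Λ₁ Λ₂,
        r = frobInner X p.1 + frobInner Y p.2.1 + frobInner Z p.2.2} := by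
    obtain ⟨B, hB⟩ := block_solvable Xd hΛ₁ hΛ₁d hY1
    obtain ⟨C, hC⟩ := block_solvable Xd hΛ₂ hΛ₂d hZ1
    -- `A` is chosen so that the matrix inequality defining `O_Λ` is an equality.
    refine ⟨(-((1 / 2 : ℝ) • (B * Λ₁ ^ 2 * Bᵀ) + (1 / 2 : ℝ) • (C * Λ₂ ^ 2 * Cᵀ)), B, C),
      ⟨?_, ?_⟩, ?_⟩
    · simp only [Matrix.IsSymm, Matrix.transpose_neg, Matrix.transpose_add, Matrix.transpose_smul,
        Matrix.transpose_mul, Matrix.transpose_pow, Matrix.transpose_transpose, hΛ₁s, hΛ₂s,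
        Matrix.mul_assoc]
    · convert Matrix.PosSemidef.zero using 1
      simp only
      abel
    · have hy := idY B
      have hz := idZ C
      rw [hB, sub_self, Matrix.mul_zero, Matrix.trace_zero] at hy
      rw [hC, sub_self, Matrix.mul_zero, Matrix.trace_zero] at hz
      have hA : frobInner X (-((1 / 2 : ℝ) • (B * Λ₁ ^ 2 * Bᵀ) + (1 / 2 : ℝ) • (C * Λ₂ ^ 2 * Cᵀ)))
          = -((1 / 2) * (X * (B * Λ₁ ^ 2 * Bᵀ)).trace
            + (1 / 2) * (X * (C * Λ₂ ^ 2 * Cᵀ)).trace) := by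
        simp only [frobInner, hXs, Matrix.mul_neg, Matrix.mul_add, Matrix.mul_smul,
          Matrix.trace_neg, Matrix.trace_add, Matrix.trace_smul, smul_eq_mul]
      simp only [hA]
      linarith
  refine ⟨⟨?_, fun b hb => hb hmem⟩, hmem⟩
  rintro r ⟨⟨A, B, C⟩, ⟨-, hP⟩, rfl⟩
  have hA := trace_mul_nonneg_of_posSemidef hX hP
  simp only [Matrix.mul_neg, Matrix.mul_add, Matrix.mul_smul,
    Matrix.trace_neg, Matrix.trace_add, Matrix.trace_smul, smul_eq_mul] at hA
  have hXA : frobInner X A = (X * A).trace := by rw [frobInner, hXs]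
  have hy := idY B
  have hz := idZ C
  have sy := (hX.conjTranspose_mul_mul_same (B * Λ₁ - Xd * (Y * Λ₁d))).trace_nonneg
  have sz := (hX.conjTranspose_mul_mul_same (C * Λ₂ - Xd * (Z * Λ₂d))).trace_nonneg
  rw [Matrix.conjTranspose_eq_transpose_of_trivial] at sy sz
  simp only [hXA]
  linarith
end

section
/- Let Λ₁ ∈ S^k₊, Λ₂ ∈ S^m₊, X ∈ Sⁿ, Y ∈ ℝ^{n×k} and Z ∈ ℝ^{n×m}. If X is not positive semidefinite, or range(Yᵀ) ⊄ range(Λ₁), or range(Zᵀ) ⊄ range(Λ₂), or range(Y) ∪ range(Z) ⊄ range(X), then the set of real numbers {X·A + Y·B + Z·C : (A,B,C) ∈ O_Λ} is not bounded above. -/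
/-!
Every alternative yields a feasible line (or ray) along which the objective is linear and
non-constant.

* If `vᵀXv < 0`, then `(-t • v vᵀ, 0, 0)` is feasible for `t ≥ 0`, with value `-t (vᵀXv) → ∞`.
* If `uᵀYw ≠ 0`, put `B = t • u wᵀ`, `C = 0` and `A = -½ B Λ₁² Bᵀ`. The value is
  `t (uᵀYw) - ½ t² (wᵀΛ₁²w) (uᵀXu)`, whose quadratic term vanishes as soon as `Λ₁ w = 0` or
  `X u = 0` (`unbdd_left`; `unbdd_right` is the same for `Z`).

Since the range of a symmetric matrix is the orthogonal complement of its kernel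
(`exists_ker_dotProduct_ne_zero`), a failing range inclusion provides such `u` and `w`, with `w` in
the kernel of `Λ₁` (or `Λ₂`), or `u` in the kernel of `X`.
-/


open Matrix

/-- A vector outside the range of a symmetric matrix is not orthogonal to its kernel. -/
lemma exists_ker_dotProduct_ne_zero {p : ℕ} {M : Matrix (Fin p) (Fin p) ℝ} (hM : M.IsSymm)
    {y : Fin p → ℝ} (hy : y ∉ LinearMap.range M.mulVecLin) :
    ∃ w : Fin p → ℝ, M *ᵥ w = 0 ∧ y ⬝ᵥ w ≠ 0 := by
  obtain ⟨f, hfy, hf⟩ := Submodule.exists_le_ker_of_notMem hy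
  have hrep : ∀ x, f x = x ⬝ᵥ fun i => f (Pi.single i 1) := fun x => by
    conv_lhs => rw [pi_eq_sum_univ' x]
    simp [dotProduct]
  refine ⟨fun i => f (Pi.single i 1), ?_, by rw [← hrep]; exact hfy⟩
  rw [← dotProduct_eq_zero_iff]
  intro x
  rw [dotProduct_comm, dotProduct_mulVec, ← mulVec_transpose, hM.eq, ← hrep]
  exact hf ⟨x, rfl⟩

/-- A set of reals containing all multiples of a nonzero number is unbounded above. -/
lemma not_bddAbove_of_line {S : Set ℝ} {c : ℝ} (hc : c ≠ 0) (h : ∀ t : ℝ, t * c ∈ S) :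
    ¬ BddAbove S := by
  rintro ⟨M, hM⟩
  have := hM (h ((M + 1) / c))
  rw [div_mul_cancel₀ _ hc] at this
  linarith

/-- The quadratic term `X · (B Λ² Bᵀ)` for `B = t • u wᵀ` vanishes in either degenerate case. -/
lemma frobInner_quadratic_eq_zero {n k : ℕ} {Λ : Matrix (Fin k) (Fin k) ℝ}
    {X : Matrix (Fin n) (Fin n) ℝ} (hΛ : Λ.IsSymm) (hX : X.IsSymm)
    {u : Fin n → ℝ} {w : Fin k → ℝ} (h : Λ *ᵥ w = 0 ∨ X *ᵥ u = 0) (t : ℝ) :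
    frobInner X (-((1 / 2 : ℝ) •
      ((t • vecMulVec u w) * Λ ^ 2 * (t • vecMulVec u w)ᵀ))) = 0 := by
  rcases h with h | h
  · have : vecMulVec u w * Λ ^ 2 = 0 := by
      rw [pow_two, ← Matrix.mul_assoc, vecMulVec_mul, ← mulVec_transpose, hΛ.eq, h]
      rw [vecMulVec_mul, zero_vecMul]
      ext i j
      simp [vecMulVec_apply]
    simp [frobInner, this]
  · have : X * vecMulVec u w = 0 := by
      rw [mul_vecMulVec, h]
      simp
    simp [frobInner, hX.eq, Matrix.mul_assoc]
    simp [← Matrix.mul_assoc, this]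

lemma frobInner_smul_vecMulVec {n k : ℕ} (Y : Matrix (Fin n) (Fin k) ℝ)
    (u : Fin n → ℝ) (w : Fin k → ℝ) (t : ℝ) :
    frobInner Y (t • vecMulVec u w) = t * (Yᵀ *ᵥ u ⬝ᵥ w) := by
  simp [frobInner, mul_vecMulVec, trace_vecMulVec]

lemma isSymm_mul_sq_mul_transpose {n k : ℕ} {Λ : Matrix (Fin k) (Fin k) ℝ} (hΛ : Λ.IsSymm)
    (B : Matrix (Fin n) (Fin k) ℝ) : (B * Λ ^ 2 * Bᵀ).IsSymm := by
  simp [Matrix.IsSymm, Matrix.transpose_mul, Matrix.transpose_pow, hΛ.eq, Matrix.mul_assoc]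

/-- Unboundedness through the `B` component, along `B = t • u wᵀ`. -/
lemma unbdd_left {n k m : ℕ} {Λ₁ : Matrix (Fin k) (Fin k) ℝ} {Λ₂ : Matrix (Fin m) (Fin m) ℝ}
    {X : Matrix (Fin n) (Fin n) ℝ} {Y : Matrix (Fin n) (Fin k) ℝ} {Z : Matrix (Fin n) (Fin m) ℝ}
    (hΛ : Λ₁.IsSymm) (hX : X.IsSymm) {u : Fin n → ℝ} {w : Fin k → ℝ}
    (h : Λ₁ *ᵥ w = 0 ∨ X *ᵥ u = 0) (hne : Yᵀ *ᵥ u ⬝ᵥ w ≠ 0) :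
    ¬ BddAbove {r : ℝ | ∃ p ∈ OLam n k m Λ₁ Λ₂,
        r = frobInner X p.1 + frobInner Y p.2.1 + frobInner Z p.2.2} := by
  refine not_bddAbove_of_line hne fun t => ⟨(-((1 / 2 : ℝ) •
      ((t • vecMulVec u w) * Λ₁ ^ 2 * (t • vecMulVec u w)ᵀ)), t • vecMulVec u w, 0), ⟨?_, ?_⟩, ?_⟩
  · exact ((isSymm_mul_sq_mul_transpose hΛ _).smul _).neg
  · simpa only [neg_add_cancel, zero_add, Matrix.zero_mul, smul_zero, neg_zero] using
      Matrix.PosSemidef.zero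
  · simp only [frobInner_quadratic_eq_zero hΛ hX h, frobInner_smul_vecMulVec]
    simp [frobInner]

/-- Unboundedness through the `C` component, along `C = t • u wᵀ`. -/
lemma unbdd_right {n k m : ℕ} {Λ₁ : Matrix (Fin k) (Fin k) ℝ} {Λ₂ : Matrix (Fin m) (Fin m) ℝ}
    {X : Matrix (Fin n) (Fin n) ℝ} {Y : Matrix (Fin n) (Fin k) ℝ} {Z : Matrix (Fin n) (Fin m) ℝ}
    (hΛ : Λ₂.IsSymm) (hX : X.IsSymm) {u : Fin n → ℝ} {w : Fin m → ℝ}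
    (h : Λ₂ *ᵥ w = 0 ∨ X *ᵥ u = 0) (hne : Zᵀ *ᵥ u ⬝ᵥ w ≠ 0) :
    ¬ BddAbove {r : ℝ | ∃ p ∈ OLam n k m Λ₁ Λ₂,
        r = frobInner X p.1 + frobInner Y p.2.1 + frobInner Z p.2.2} := by
  refine not_bddAbove_of_line hne fun t => ⟨(-((1 / 2 : ℝ) •
      ((t • vecMulVec u w) * Λ₂ ^ 2 * (t • vecMulVec u w)ᵀ)), 0, t • vecMulVec u w), ⟨?_, ?_⟩, ?_⟩
  · exact ((isSymm_mul_sq_mul_transpose hΛ _).smul _).neg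
  · simpa only [neg_add_cancel, add_zero, Matrix.zero_mul, smul_zero, neg_zero] using
      Matrix.PosSemidef.zero
  · simp only [frobInner_quadratic_eq_zero hΛ hX h, frobInner_smul_vecMulVec]
    simp [frobInner]

/-- Unboundedness along `A = -t • v vᵀ` when `vᵀXv < 0`. -/
lemma unbdd_of_not_posSemidef {n k m : ℕ} {Λ₁ : Matrix (Fin k) (Fin k) ℝ}
    {Λ₂ : Matrix (Fin m) (Fin m) ℝ}
    {X : Matrix (Fin n) (Fin n) ℝ} {Y : Matrix (Fin n) (Fin k) ℝ} {Z : Matrix (Fin n) (Fin m) ℝ}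
    (hX : X.IsSymm) (h : ¬ X.PosSemidef) :
    ¬ BddAbove {r : ℝ | ∃ p ∈ OLam n k m Λ₁ Λ₂,
        r = frobInner X p.1 + frobInner Y p.2.1 + frobInner Z p.2.2} := by
  rintro ⟨M, hM⟩
  have hXh : X.IsHermitian := by
    rw [Matrix.IsHermitian, conjTranspose_eq_transpose_of_trivial, hX.eq]
  obtain ⟨v, hv⟩ : ∃ v : Fin n → ℝ, v ⬝ᵥ X *ᵥ v < 0 := by
    by_contra! hc
    exact h (.of_dotProduct_mulVec_nonneg hXh fun v => by simpa using hc v)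
  have key : ∀ t : ℝ, 0 ≤ t → -t * (v ⬝ᵥ X *ᵥ v) ≤ M := fun t ht => by
    refine hM ⟨((-t) • vecMulVec v v, 0, 0), ⟨?_, ?_⟩, ?_⟩
    · simp [Matrix.IsSymm, transpose_vecMulVec]
    · simpa using (posSemidef_vecMulVec_self_star v).smul ht
    · simp only [frobInner_smul_vecMulVec, hX.eq, dotProduct_comm v]
      simp [frobInner]
  have hpos : 0 < -(v ⬝ᵥ X *ᵥ v) := by linarith
  have := key ((|M| + 1) / -(v ⬝ᵥ X *ᵥ v)) (by positivity)
  rw [neg_mul_comm, div_mul_cancel₀ _ hpos.ne'] at this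
  linarith [le_abs_self M]

/-- If `X` fails to be positive semidefinite, or one of the range compatibility conditions
fails, then `{X·A + Y·B + Z·C : (A,B,C) ∈ O_Λ}` is not bounded above. -/
theorem weighted_action_unbounded (n k m : ℕ)
    (Λ₁ : Matrix (Fin k) (Fin k) ℝ) (Λ₂ : Matrix (Fin m) (Fin m) ℝ)
    (X : Matrix (Fin n) (Fin n) ℝ)
    (Y : Matrix (Fin n) (Fin k) ℝ) (Z : Matrix (Fin n) (Fin m) ℝ)
    (hΛ₁ : Λ₁.PosSemidef) (hΛ₂ : Λ₂.PosSemidef) (hX : X.IsSymm)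
    (hbad : ¬ X.PosSemidef ∨
      ¬ LinearMap.range (Yᵀ).mulVecLin ≤ LinearMap.range Λ₁.mulVecLin ∨
      ¬ LinearMap.range (Zᵀ).mulVecLin ≤ LinearMap.range Λ₂.mulVecLin ∨
      ¬ (LinearMap.range Y.mulVecLin ≤ LinearMap.range X.mulVecLin ∧
          LinearMap.range Z.mulVecLin ≤ LinearMap.range X.mulVecLin)) :
    ¬ BddAbove {r : ℝ | ∃ p ∈ OLam n k m Λ₁ Λ₂,
        r = frobInner X p.1 + frobInner Y p.2.1 + frobInner Z p.2.2} := by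
  have hS₁ : Λ₁.IsSymm := by simpa using hΛ₁.isHermitian
  have hS₂ : Λ₂.IsSymm := by simpa using hΛ₂.isHermitian
  rw [not_and_or] at hbad
  simp only [SetLike.not_le_iff_exists] at hbad
  rcases hbad with h | ⟨_, ⟨u, rfl⟩, h⟩ | ⟨_, ⟨u, rfl⟩, h⟩ | ⟨_, ⟨w, rfl⟩, h⟩ | ⟨_, ⟨w, rfl⟩, h⟩
  · exact unbdd_of_not_posSemidef hX h
  · obtain ⟨w, hw, hne⟩ := exists_ker_dotProduct_ne_zero hS₁ h
    exact unbdd_left hS₁ hX (.inl hw) hne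
  · obtain ⟨w, hw, hne⟩ := exists_ker_dotProduct_ne_zero hS₂ h
    exact unbdd_right hS₂ hX (.inl hw) hne
  · obtain ⟨u, hu, hne⟩ := exists_ker_dotProduct_ne_zero hX h
    refine unbdd_left hS₁ hX (w := w) (.inr hu) ?_
    rwa [mulVec_transpose, ← dotProduct_mulVec, dotProduct_comm]
  · obtain ⟨u, hu, hne⟩ := exists_ker_dotProduct_ne_zero hX h
    refine unbdd_right hS₂ hX (w := w) (.inr hu) ?_
    rwa [mulVec_transpose, ← dotProduct_mulVec, dotProduct_comm]
end

section
/- Let Λ₁ ∈ S^k₊ and Λ₂ ∈ S^m₊ with Moore–Penrose pseudoinverses Λ₁†, Λ₂†. Let X ∈ Sⁿ₊ with Moore–Penrose pseudoinverse X†, and let Y ∈ ℝ^{n×k}, Z ∈ ℝ^{n×m} satisfy range(Yᵀ) ⊆ range(Λ₁), range(Zᵀ) ⊆ range(Λ₂), range(Y) ⊆ range(X) and range(Z) ⊆ range(X). Then a triple (A,B,C) ∈ O_Λ satisfies X·A + Y·B + Z·C = (1/2)·(YΛ₁†)·(X†(YΛ₁†)) + (1/2)·(ZΛ₂†)·(X†(ZΛ₂†))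 if and only if Y = X B Λ₁², Z = X C Λ₂², and X·(A + (1/2)·B Λ₁² Bᵀ + (1/2)·C Λ₂² Cᵀ) = 0. -/
/-!
Completing the square. With `D = B Λ₁ - X† Y Λ₁†` the range conditions give
`trace (Dᵀ X D) = X · (B Λ₁² Bᵀ) - 2 Y · B + (Y Λ₁†) · (X† Y Λ₁†)`  (`gap_identity`), and likewise
for `Z`, `C`, `Λ₂` with a matrix `E`. Hence the maximal value minus `X·A + Y·B + Z·C` equals
`½ trace (Dᵀ X D) + ½ trace (Eᵀ X E) - X · (A + ½ B Λ₁² Bᵀ + ½ C Λ₂² Cᵀ)`,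
a sum of three nonnegative terms, the last one because the trace of a product of two positive
semidefinite matrices is nonnegative. It vanishes iff each term does, and `trace (Dᵀ X D) = 0`
means `X D = 0`, which amounts to `Y = X B Λ₁²` (`trace_gap_eq_zero_iff`).
-/

open Matrix

/-- The Gram factorization `X = Pᴴ P` of a positive semidefinite matrix. -/
lemma exists_eq_conjTranspose_mul_self {n : ℕ} {X : Matrix (Fin n) (Fin n) ℝ}
    (hX : X.PosSemidef) : ∃ P : Matrix (Fin n) (Fin n) ℝ, X = Pᴴ * P := by
  open scoped MatrixOrder Matrix.Norms.L2Operator in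
  exact CStarAlgebra.nonneg_iff_eq_star_mul_self.mp hX.nonneg

lemma frobInner_nonneg_of_posSemidef {n : ℕ} {X N : Matrix (Fin n) (Fin n) ℝ}
    (hX : X.PosSemidef) (hN : N.PosSemidef) : 0 ≤ frobInner X N := by
  obtain ⟨P, rfl⟩ := exists_eq_conjTranspose_mul_self hX
  have h := (hN.mul_mul_conjTranspose_same P).trace_nonneg
  rw [conjTranspose_eq_transpose_of_trivial] at h
  rw [frobInner, conjTranspose_eq_transpose_of_trivial, transpose_mul, transpose_transpose,
    Matrix.mul_assoc, trace_mul_comm]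
  exact h

lemma trace_transpose_mul_mul_eq_zero_iff {n k : ℕ} {X : Matrix (Fin n) (Fin n) ℝ}
    (hX : X.PosSemidef) (D : Matrix (Fin n) (Fin k) ℝ) :
    (Dᵀ * X * D).trace = 0 ↔ X * D = 0 := by
  constructor
  · intro h
    obtain ⟨P, rfl⟩ := exists_eq_conjTranspose_mul_self hX
    have h' : ((P * D)ᴴ * (P * D)).trace = 0 := by
      rw [← h, conjTranspose_mul, conjTranspose_eq_transpose_of_trivial D]
      simp only [Matrix.mul_assoc]
    rw [trace_conjTranspose_mul_self_eq_zero_iff] at h'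
    rw [Matrix.mul_assoc, h', Matrix.mul_zero]
  · intro h
    rw [Matrix.mul_assoc, h, Matrix.mul_zero, trace_zero]

lemma exists_eq_mul_of_range_le {p q r : ℕ} {M : Matrix (Fin p) (Fin q) ℝ}
    {N : Matrix (Fin p) (Fin r) ℝ}
    (h : LinearMap.range M.mulVecLin ≤ LinearMap.range N.mulVecLin) :
    ∃ K : Matrix (Fin r) (Fin q) ℝ, M = N * K := by
  have hcol (j : Fin q) : ∃ v, N *ᵥ v = M.col j := by
    obtain ⟨v, hv⟩ := h ⟨Pi.single j 1, rfl⟩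
    exact ⟨v, by simpa using hv⟩
  choose v hv using hcol
  refine ⟨Matrix.of fun i j => v j i, ?_⟩
  ext i j
  exact (congrFun (hv j) i).symm

/-- `A A†` is the orthogonal projection onto the range of `A`, so it fixes any `M` whose range
lies in it. -/
lemma IsMoorePenrose.mul_mul_of_range_le {p q r : ℕ} {A : Matrix (Fin p) (Fin q) ℝ}
    {Ad : Matrix (Fin q) (Fin p) ℝ} (hA : IsMoorePenrose A Ad) {M : Matrix (Fin p) (Fin r) ℝ}
    (h : LinearMap.range M.mulVecLin ≤ LinearMap.range A.mulVecLin) : A * (Ad * M) = M := by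
  obtain ⟨K, rfl⟩ := exists_eq_mul_of_range_le h
  rw [← Matrix.mul_assoc, ← Matrix.mul_assoc, hA.2.2.2]

lemma IsMoorePenrose.mul_mul_of_range_transpose_le {p q : ℕ} {L Ld : Matrix (Fin q) (Fin q) ℝ}
    (hL : IsMoorePenrose L Ld) (hsymm : Lᵀ = L) {Y : Matrix (Fin p) (Fin q) ℝ}
    (h : LinearMap.range (Yᵀ).mulVecLin ≤ LinearMap.range L.mulVecLin) : Y * Ld * L = Y := by
  obtain ⟨K, hK⟩ := exists_eq_mul_of_range_le h
  have hY : Y = Kᵀ * L := by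
    rw [← transpose_transpose Y, hK, transpose_mul, hsymm]
  rw [hY, Matrix.mul_assoc, Matrix.mul_assoc, ← Matrix.mul_assoc L, hL.2.2.2]

lemma IsMoorePenrose.sq_mul {q : ℕ} {L Ld : Matrix (Fin q) (Fin q) ℝ}
    (hL : IsMoorePenrose L Ld) (hsymm : Lᵀ = L) : L ^ 2 * Ld = L := by
  have h : (L * (L * Ld))ᵀ = L := by
    rw [transpose_mul, hL.2.1, hsymm, hL.2.2.2]
  rw [pow_two, Matrix.mul_assoc, ← transpose_transpose (L * (L * Ld)), h, hsymm]

lemma gap_identity {n k : ℕ} {L Ld : Matrix (Fin k) (Fin k) ℝ} {X Xd : Matrix (Fin n) (Fin n) ℝ}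
    {Y : Matrix (Fin n) (Fin k) ℝ} (hL : L.PosSemidef) (hX : X.PosSemidef)
    (hLd : IsMoorePenrose L Ld) (hXd : IsMoorePenrose X Xd)
    (hY1 : LinearMap.range (Yᵀ).mulVecLin ≤ LinearMap.range L.mulVecLin)
    (hY2 : LinearMap.range Y.mulVecLin ≤ LinearMap.range X.mulVecLin)
    (B : Matrix (Fin n) (Fin k) ℝ) :
    ((B * L - Xd * (Y * Ld))ᵀ * X * (B * L - Xd * (Y * Ld))).trace =
      frobInner X (B * L ^ 2 * Bᵀ) - 2 * frobInner Y B +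
        frobInner (Y * Ld) (Xd * (Y * Ld)) := by
  have hLs : Lᵀ = L := by simpa using hL.isHermitian.eq
  have hXs : Xᵀ = X := by simpa using hX.isHermitian.eq
  have hW : X * (Xd * (Y * Ld)) = Y * Ld := by
    rw [← Matrix.mul_assoc Xd, ← Matrix.mul_assoc X, hXd.mul_mul_of_range_le hY2]
  have hYL : Y * Ld * L = Y := hLd.mul_mul_of_range_transpose_le hLs hY1
  have hquad : ((B * L)ᵀ * (X * (B * L))).trace = frobInner X (B * L ^ 2 * Bᵀ) := by
    rw [frobInner, hXs, trace_mul_comm, transpose_mul, hLs, pow_two]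
    simp only [Matrix.mul_assoc]
  have hcross : ((B * L)ᵀ * (Y * Ld)).trace = frobInner Y B := by
    rw [frobInner, transpose_mul, hLs, Matrix.mul_assoc, trace_mul_comm, Matrix.mul_assoc, hYL,
      ← trace_transpose, transpose_mul, transpose_transpose]
  have hcross' : ((Xd * (Y * Ld))ᵀ * (X * (B * L))).trace = frobInner Y B := by
    rw [← hcross, ← trace_transpose, transpose_mul, transpose_transpose, transpose_mul X, hXs,
      Matrix.mul_assoc, hW]
  have hconst : ((Xd * (Y * Ld))ᵀ * (Y * Ld)).trace = frobInner (Y * Ld) (Xd * (Y * Ld)) := by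
    rw [frobInner, ← trace_transpose, transpose_mul, transpose_transpose]
  rw [Matrix.mul_assoc, Matrix.mul_sub X, hW, transpose_sub, Matrix.sub_mul, Matrix.mul_sub,
    Matrix.mul_sub, trace_sub, trace_sub, trace_sub, hquad, hcross, hcross', hconst]
  ring

lemma trace_gap_eq_zero_iff {n k : ℕ} {L Ld : Matrix (Fin k) (Fin k) ℝ}
    {X Xd : Matrix (Fin n) (Fin n) ℝ}
    {Y : Matrix (Fin n) (Fin k) ℝ} (hL : L.PosSemidef) (hX : X.PosSemidef)
    (hLd : IsMoorePenrose L Ld) (hXd : IsMoorePenrose X Xd)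
    (hY1 : LinearMap.range (Yᵀ).mulVecLin ≤ LinearMap.range L.mulVecLin)
    (hY2 : LinearMap.range Y.mulVecLin ≤ LinearMap.range X.mulVecLin)
    (B : Matrix (Fin n) (Fin k) ℝ) :
    ((B * L - Xd * (Y * Ld))ᵀ * X * (B * L - Xd * (Y * Ld))).trace = 0 ↔ Y = X * B * L ^ 2 := by
  have hLs : Lᵀ = L := by simpa using hL.isHermitian.eq
  have hW : X * (Xd * (Y * Ld)) = Y * Ld := by
    rw [← Matrix.mul_assoc Xd, ← Matrix.mul_assoc X, hXd.mul_mul_of_range_le hY2]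
  have hYL : Y * Ld * L = Y := hLd.mul_mul_of_range_transpose_le hLs hY1
  rw [trace_transpose_mul_mul_eq_zero_iff hX, Matrix.mul_sub, hW, sub_eq_zero]
  constructor
  · intro h
    rw [pow_two, ← Matrix.mul_assoc, Matrix.mul_assoc X, h, hYL]
  · intro h
    conv_rhs => rw [h]
    rw [Matrix.mul_assoc, hLd.sq_mul hLs, Matrix.mul_assoc]

/-- Characterization of the maximizers: a triple `(A,B,C) ∈ O_Λ` attains the value
`½ (YΛ₁†)·(X†(YΛ₁†)) + ½ (ZΛ₂†)·(X†(ZΛ₂†))` in `X·A + Y·B + Z·C` if and only if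
`Y = X B Λ₁²`, `Z = X C Λ₂²` and `X·(A + ½ B Λ₁² Bᵀ + ½ C Λ₂² Cᵀ) = 0`. -/
theorem weighted_action_maximizer_iff (n k m : ℕ)
    (Λ₁ Λ₁d : Matrix (Fin k) (Fin k) ℝ) (Λ₂ Λ₂d : Matrix (Fin m) (Fin m) ℝ)
    (X Xd : Matrix (Fin n) (Fin n) ℝ)
    (Y : Matrix (Fin n) (Fin k) ℝ) (Z : Matrix (Fin n) (Fin m) ℝ)
    (hΛ₁ : Λ₁.PosSemidef) (hΛ₂ : Λ₂.PosSemidef) (hX : X.PosSemidef)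
    (hΛ₁d : IsMoorePenrose Λ₁ Λ₁d) (hΛ₂d : IsMoorePenrose Λ₂ Λ₂d)
    (hXd : IsMoorePenrose X Xd)
    (hY1 : LinearMap.range (Yᵀ).mulVecLin ≤ LinearMap.range Λ₁.mulVecLin)
    (hZ1 : LinearMap.range (Zᵀ).mulVecLin ≤ LinearMap.range Λ₂.mulVecLin)
    (hY2 : LinearMap.range Y.mulVecLin ≤ LinearMap.range X.mulVecLin)
    (hZ2 : LinearMap.range Z.mulVecLin ≤ LinearMap.range X.mulVecLin)
    (A : Matrix (Fin n) (Fin n) ℝ) (B : Matrix (Fin n) (Fin k) ℝ)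
    (C : Matrix (Fin n) (Fin m) ℝ) (hmem : (A, B, C) ∈ OLam n k m Λ₁ Λ₂) :
    frobInner X A + frobInner Y B + frobInner Z C =
        (1 / 2) * frobInner (Y * Λ₁d) (Xd * (Y * Λ₁d)) +
          (1 / 2) * frobInner (Z * Λ₂d) (Xd * (Z * Λ₂d)) ↔
      (Y = X * B * Λ₁ ^ 2 ∧ Z = X * C * Λ₂ ^ 2 ∧
        frobInner X (A + (1 / 2 : ℝ) • (B * Λ₁ ^ 2 * Bᵀ) +
          (1 / 2 : ℝ) • (C * Λ₂ ^ 2 * Cᵀ)) = 0) := by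
  obtain ⟨-, hN⟩ := hmem
  have hgapY := gap_identity hΛ₁ hX hΛ₁d hXd hY1 hY2 B
  have hgapZ := gap_identity hΛ₂ hX hΛ₂d hXd hZ1 hZ2 C
  have hzeroY := trace_gap_eq_zero_iff hΛ₁ hX hΛ₁d hXd hY1 hY2 B
  have hzeroZ := trace_gap_eq_zero_iff hΛ₂ hX hΛ₂d hXd hZ1 hZ2 C
  have hpsdY := (hX.conjTranspose_mul_mul_same (B * Λ₁ - Xd * (Y * Λ₁d))).trace_nonneg
  have hpsdZ := (hX.conjTranspose_mul_mul_same (C * Λ₂ - Xd * (Z * Λ₂d))).trace_nonneg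
  rw [conjTranspose_eq_transpose_of_trivial] at hpsdY hpsdZ
  have hslack := frobInner_nonneg_of_posSemidef hX hN
  have hneg (M : Matrix (Fin n) (Fin n) ℝ) : frobInner X (-M) = -frobInner X M := by
    simp [frobInner]
  have hsplit : frobInner X (A + (1 / 2 : ℝ) • (B * Λ₁ ^ 2 * Bᵀ) +
      (1 / 2 : ℝ) • (C * Λ₂ ^ 2 * Cᵀ)) = frobInner X A +
        (1 / 2) * frobInner X (B * Λ₁ ^ 2 * Bᵀ) + (1 / 2) * frobInner X (C * Λ₂ ^ 2 * Cᵀ) := by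
    simp only [frobInner, Matrix.mul_add, Matrix.mul_smul, trace_add, trace_smul, smul_eq_mul]
  rw [hneg] at hslack
  dsimp only at hslack
  rw [← hzeroY, ← hzeroZ]
  -- The optimality gap is the sum of the three nonnegative terms `hpsdY`, `hpsdZ`, `hslack`.
  constructor
  · intro h
    refine ⟨?_, ?_, ?_⟩ <;> linarith
  · rintro ⟨h1, h2, h3⟩
    linarith
end

section
/- Let Λ₁ ∈ S^k₊ and Λ₂ ∈ S^m₊ with Moore–Penrose pseudoinverses Λ₁†, Λ₂†, let X ∈ Sⁿ₊ with Moore–Penrose pseudoinverse X†, and let u ∈ ℝ^{n×k}, W ∈ ℝ^{n×m}. Then (1/2)·(uΛ₁)·(X(uΛ₁)) + (1/2)·(WΛ₂)·(X(WΛ₂)) is the least upper bound of the set { Y·u + Z·W − [(1/2)·(YΛ₁†)·(X†(YΛ₁†)) + (1/2)·(ZΛ₂†)·(X†(ZΛ₂†))] : Y ∈ ℝ^{n×k}, Z ∈ ℝ^{n×m} with range(Yᵀ) ⊆ range(Λ₁), range(Zᵀ) ⊆ range(Λ₂), range(Y) ⊆ range(X), range(Z) ⊆ range(X) }, and the supremum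 is attained at Y = X u Λ₁², Z = X W Λ₂². (Pointwise Legendre conjugate of the weighted action integrand.) -/
/-!
The two pairs `(Y, Λ₁)` and `(Z, Λ₂)` decouple, so everything reduces to a single block. There,
put `V = Y Λ†` and `T = u Λ`. Admissibility of `Y` means exactly that `Y Λ† Λ = Y` and
`X X† Y = Y`, hence `Y · u = V · T` and `X X† V = V`. Completing the square,

  `½ V · X† V + ½ T · X T - V · T = ½ (X† V - T) · X (X† V - T) ≥ 0`

because `X` is positive semidefinite (`block_le`). For `Y = X u Λ²` one has `Λ² Λ† = Λ`, so
`V = X T`, and then `V · X† V = V · T = T · X T` gives equality (`block_eq`).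
-/

open Matrix

lemma range_mul_le {p q r : ℕ} (A : Matrix (Fin p) (Fin q) ℝ) (B : Matrix (Fin q) (Fin r) ℝ) :
    LinearMap.range (A * B).mulVecLin ≤ LinearMap.range A.mulVecLin := by
  rw [Matrix.mulVecLin_mul]
  exact LinearMap.range_comp_le_range _ _

/-- `A A†` acts as the identity on matrices whose columns lie in the range of `A`. -/
lemma mul_pinv_mul_of_range_le {p q r : ℕ} {A : Matrix (Fin p) (Fin q) ℝ}
    {Ad : Matrix (Fin q) (Fin p) ℝ} {Y : Matrix (Fin p) (Fin r) ℝ} (hA : IsMoorePenrose A Ad)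
    (h : LinearMap.range Y.mulVecLin ≤ LinearMap.range A.mulVecLin) : A * Ad * Y = Y := by
  apply Matrix.ext_of_mulVec_single
  intro i
  obtain ⟨x, hx⟩ := h ⟨Pi.single i 1, rfl⟩
  simp only [Matrix.mulVecLin_apply] at hx
  rw [← Matrix.mulVec_mulVec, ← hx, Matrix.mulVec_mulVec, hA.2.2.2]

/-- The transposed form of `mul_pinv_mul_of_range_le` for a symmetric matrix: `A† A` acts as the
identity from the right. -/
lemma mul_pinv_mul_of_range_transpose_le {p q : ℕ} {A Ad : Matrix (Fin q) (Fin q) ℝ}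
    {Y : Matrix (Fin p) (Fin q) ℝ} (hs : Aᵀ = A) (hA : IsMoorePenrose A Ad)
    (h : LinearMap.range (Yᵀ).mulVecLin ≤ LinearMap.range A.mulVecLin) : Y * Ad * A = Y := by
  have h1 := mul_pinv_mul_of_range_le hA h
  have h2 : Y = (Ad * Yᵀ)ᵀ * A := by
    conv_lhs => rw [← Matrix.transpose_transpose Y, ← h1, Matrix.mul_assoc,
      Matrix.transpose_mul, hs]
  rw [h2, Matrix.mul_assoc, Matrix.mul_assoc, ← Matrix.mul_assoc A Ad A, hA.2.2.2]

lemma frobInner_mul_left {p q r : ℕ} (V : Matrix (Fin p) (Fin q) ℝ)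
    (S : Matrix (Fin q) (Fin r) ℝ) (u : Matrix (Fin p) (Fin r) ℝ) :
    frobInner (V * S) u = frobInner V (u * Sᵀ) := by
  unfold frobInner
  rw [Matrix.transpose_mul, Matrix.mul_assoc, Matrix.trace_mul_comm, Matrix.mul_assoc]

lemma frobInner_comm {p q : ℕ} (A B : Matrix (Fin p) (Fin q) ℝ) :
    frobInner A B = frobInner B A := by
  unfold frobInner
  rw [← Matrix.trace_transpose, Matrix.transpose_mul, Matrix.transpose_transpose]

lemma frobInner_self_nonneg {p q : ℕ} {X : Matrix (Fin p) (Fin p) ℝ} (hX : X.PosSemidef)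
    (Q : Matrix (Fin p) (Fin q) ℝ) : 0 ≤ frobInner Q (X * Q) := by
  have h := (hX.conjTranspose_mul_mul_same Q).trace_nonneg
  rwa [Matrix.conjTranspose_eq_transpose_of_trivial, Matrix.mul_assoc] at h

/-- The Fenchel–Young inequality for a single block. -/
lemma block_le {n k : ℕ} {L Ld : Matrix (Fin k) (Fin k) ℝ} {X Xd : Matrix (Fin n) (Fin n) ℝ}
    (u Y : Matrix (Fin n) (Fin k) ℝ) (hL : L.PosSemidef) (hX : X.PosSemidef)
    (hLd : IsMoorePenrose L Ld) (hXd : IsMoorePenrose X Xd)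
    (h1 : LinearMap.range (Yᵀ).mulVecLin ≤ LinearMap.range L.mulVecLin)
    (h2 : LinearMap.range Y.mulVecLin ≤ LinearMap.range X.mulVecLin) :
    frobInner Y u - (1 / 2) * frobInner (Y * Ld) (Xd * (Y * Ld)) ≤
      (1 / 2) * frobInner (u * L) (X * (u * L)) := by
  have hLs : Lᵀ = L := hL.isHermitian
  have hXs : Xᵀ = X := hX.isHermitian
  have e1 : frobInner Y u = frobInner (Y * Ld) (u * L) := by
    conv_lhs => rw [← mul_pinv_mul_of_range_transpose_le hLs hLd h1, frobInner_mul_left, hLs]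
  have e2 : X * (Xd * (Y * Ld)) = Y * Ld := by
    rw [← Matrix.mul_assoc, ← Matrix.mul_assoc, mul_pinv_mul_of_range_le hXd h2]
  rw [e1]
  generalize Y * Ld = V at *
  generalize u * L = T at *
  have h := frobInner_self_nonneg hX (Xd * V - T)
  have e3 : frobInner (Xd * V) (X * T) = frobInner V T := by
    unfold frobInner
    conv_rhs => rw [← e2, Matrix.transpose_mul, hXs, Matrix.mul_assoc]
  have e4 : frobInner (Xd * V - T) (X * (Xd * V - T)) =
      frobInner (Xd * V) V - frobInner (Xd * V) (X * T) - frobInner T V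
        + frobInner T (X * T) := by
    rw [Matrix.mul_sub, e2]
    simp only [frobInner, Matrix.transpose_sub, Matrix.sub_mul, Matrix.mul_sub, Matrix.trace_sub]
    ring
  rw [e4, e3, frobInner_comm T V, frobInner_comm (Xd * V) V] at h
  linarith

/-- Equality in `block_le` at `Y = X u Λ²`. -/
lemma block_eq {n k : ℕ} {L Ld : Matrix (Fin k) (Fin k) ℝ} {X Xd : Matrix (Fin n) (Fin n) ℝ}
    (u : Matrix (Fin n) (Fin k) ℝ) (hL : L.PosSemidef)
    (hLd : IsMoorePenrose L Ld) (hXd : IsMoorePenrose X Xd) (hX : X.PosSemidef) :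
    frobInner (X * u * L ^ 2) u -
        (1 / 2) * frobInner ((X * u * L ^ 2) * Ld) (Xd * ((X * u * L ^ 2) * Ld)) =
      (1 / 2) * frobInner (u * L) (X * (u * L)) := by
  have hLs : Lᵀ = L := hL.isHermitian
  have hXs : Xᵀ = X := hX.isHermitian
  -- `Λ Λ Λ† = Λ (Λ Λ†)ᵀ = (Λ Λ† Λ)ᵀ = Λ`
  have hLL : L * (L * Ld) = L := by
    have := congrArg Matrix.transpose hLd.2.2.2
    rwa [Matrix.transpose_mul, hLd.2.1, hLs] at this
  have e1 : X * u * L ^ 2 * Ld = X * (u * L) := by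
    rw [pow_two]
    simp only [Matrix.mul_assoc]
    rw [hLL]
  have e2 : frobInner (X * u * L ^ 2) u = frobInner (u * L) (X * (u * L)) := by
    rw [pow_two, ← Matrix.mul_assoc, frobInner_mul_left, hLs, frobInner_comm, Matrix.mul_assoc]
  have e3 : frobInner (X * (u * L)) (Xd * (X * (u * L))) = frobInner (u * L) (X * (u * L)) := by
    unfold frobInner
    rw [Matrix.transpose_mul, hXs, Matrix.mul_assoc, ← Matrix.mul_assoc Xd, ← Matrix.mul_assoc X,
      ← Matrix.mul_assoc X, hXd.2.2.2]
  rw [e1, e2, e3]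
  ring

lemma range_optimizer_transpose_le {n k : ℕ} {L : Matrix (Fin k) (Fin k) ℝ}
    (M : Matrix (Fin n) (Fin k) ℝ) (hL : L.PosSemidef) :
    LinearMap.range ((M * L ^ 2)ᵀ).mulVecLin ≤ LinearMap.range L.mulVecLin := by
  have hLs : Lᵀ = L := hL.isHermitian
  rw [pow_two, Matrix.transpose_mul, Matrix.transpose_mul, hLs, Matrix.mul_assoc]
  exact range_mul_le _ _

/-- **Pointwise Legendre conjugate of the weighted action integrand.**
`½ (uΛ₁)·(X(uΛ₁)) + ½ (WΛ₂)·(X(WΛ₂))` is the least upper bound of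
`Y·u + Z·W − [½ (YΛ₁†)·(X†(YΛ₁†)) + ½ (ZΛ₂†)·(X†(ZΛ₂†))]` over all admissible `(Y, Z)`,
and the supremum is attained at `Y = X u Λ₁²`, `Z = X W Λ₂²`. -/
theorem legendre_conjugate_weighted_action (n k m : ℕ)
    (Λ₁ Λ₁d : Matrix (Fin k) (Fin k) ℝ) (Λ₂ Λ₂d : Matrix (Fin m) (Fin m) ℝ)
    (X Xd : Matrix (Fin n) (Fin n) ℝ)
    (u : Matrix (Fin n) (Fin k) ℝ) (W : Matrix (Fin n) (Fin m) ℝ)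
    (hΛ₁ : Λ₁.PosSemidef) (hΛ₂ : Λ₂.PosSemidef) (hX : X.PosSemidef)
    (hΛ₁d : IsMoorePenrose Λ₁ Λ₁d) (hΛ₂d : IsMoorePenrose Λ₂ Λ₂d)
    (hXd : IsMoorePenrose X Xd) :
    IsLUB {r : ℝ | ∃ (Y : Matrix (Fin n) (Fin k) ℝ) (Z : Matrix (Fin n) (Fin m) ℝ),
        LinearMap.range (Yᵀ).mulVecLin ≤ LinearMap.range Λ₁.mulVecLin ∧
        LinearMap.range (Zᵀ).mulVecLin ≤ LinearMap.range Λ₂.mulVecLin ∧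
        LinearMap.range Y.mulVecLin ≤ LinearMap.range X.mulVecLin ∧
        LinearMap.range Z.mulVecLin ≤ LinearMap.range X.mulVecLin ∧
        r = frobInner Y u + frobInner Z W -
          ((1 / 2) * frobInner (Y * Λ₁d) (Xd * (Y * Λ₁d)) +
            (1 / 2) * frobInner (Z * Λ₂d) (Xd * (Z * Λ₂d)))}
      ((1 / 2) * frobInner (u * Λ₁) (X * (u * Λ₁)) +
        (1 / 2) * frobInner (W * Λ₂) (X * (W * Λ₂))) ∧
    (LinearMap.range ((X * u * Λ₁ ^ 2)ᵀ).mulVecLin ≤ LinearMap.range Λ₁.mulVecLin ∧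
      LinearMap.range ((X * W * Λ₂ ^ 2)ᵀ).mulVecLin ≤ LinearMap.range Λ₂.mulVecLin ∧
      LinearMap.range (X * u * Λ₁ ^ 2).mulVecLin ≤ LinearMap.range X.mulVecLin ∧
      LinearMap.range (X * W * Λ₂ ^ 2).mulVecLin ≤ LinearMap.range X.mulVecLin) ∧
    frobInner (X * u * Λ₁ ^ 2) u + frobInner (X * W * Λ₂ ^ 2) W -
        ((1 / 2) * frobInner ((X * u * Λ₁ ^ 2) * Λ₁d) (Xd * ((X * u * Λ₁ ^ 2) * Λ₁d)) +
          (1 / 2) * frobInner ((X * W * Λ₂ ^ 2) * Λ₂d) (Xd * ((X * W * Λ₂ ^ 2) * Λ₂d))) =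
      (1 / 2) * frobInner (u * Λ₁) (X * (u * Λ₁)) +
        (1 / 2) * frobInner (W * Λ₂) (X * (W * Λ₂)) := by
  have hr1 := range_optimizer_transpose_le (X * u) hΛ₁
  have hr2 := range_optimizer_transpose_le (X * W) hΛ₂
  have hr3 : LinearMap.range (X * u * Λ₁ ^ 2).mulVecLin ≤ LinearMap.range X.mulVecLin := by
    rw [Matrix.mul_assoc]; exact range_mul_le _ _
  have hr4 : LinearMap.range (X * W * Λ₂ ^ 2).mulVecLin ≤ LinearMap.range X.mulVecLin := by
    rw [Matrix.mul_assoc]; exact range_mul_le _ _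
  have b1 := block_eq u hΛ₁ hΛ₁d hXd hX
  have b2 := block_eq W hΛ₂ hΛ₂d hXd hX
  refine ⟨IsGreatest.isLUB ⟨⟨X * u * Λ₁ ^ 2, X * W * Λ₂ ^ 2, hr1, hr2, hr3, hr4, ?_⟩, ?_⟩,
    ⟨hr1, hr2, hr3, hr4⟩, ?_⟩
  · linarith
  · rintro r ⟨Y, Z, h1, h2, h3, h4, rfl⟩
    have c1 := block_le u Y hΛ₁ hX hΛ₁d hXd h1 h3
    have c2 := block_le W Z hΛ₂ hX hΛ₂d hXd h2 h4
    linarith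
  · linarith
end

section
/- Let A₀, A₁ be n×n real symmetric positive definite matrices that commute, and let Λ₂ be an n×n real symmetric positive definite matrix commuting with both A₀ and A₁. For t ∈ [0,1] the matrix C(t) := t·A₁ + (1−t)·A₀ is positive definite; define Ψ(t) := 2·C(t)⁻¹·(A₁ − A₀)·Λ₂⁻². Then for every t ∈ [0,1], the matrix-valued function Ψ has derivative Ψ′(t) = −(1/2)·Ψ(t)·Λ₂²·Ψ(t) at t (in the sense of HasDerivAt for functions from ℝ into the normed space of n×n matrices). -/
/-!
Write `C(s) = s·A₁ + (1 − s)·A₀` and `D = A₁ − A₀`. Positive definiteness of `C(t)` is convexity of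
the positive definite cone. The derivative of the inverse comes from the resolvent identity
`C(s)⁻¹ − C(t)⁻¹ = −(s − t)·C(s)⁻¹ D C(t)⁻¹` and the continuity of matrix inversion at an
invertible matrix, giving `(C⁻¹)′ = −C⁻¹ D C⁻¹`. Since `Λ₂⁻² Λ₂² = 1`, the right-hand side of the
Riccati equation collapses to `−2·C⁻¹ D C⁻¹ D Λ₂⁻²`, which is the derivative of `2·C⁻¹ D Λ₂⁻²`.
-/

open Matrix

attribute [local instance] Matrix.normedAddCommGroup Matrix.normedSpace

theorem posDef_segment {n : ℕ} {A₀ A₁ : Matrix (Fin n) (Fin n) ℝ}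
    (hA₀ : A₀.PosDef) (hA₁ : A₁.PosDef) {t : ℝ} (ht : t ∈ Set.Icc (0 : ℝ) 1) :
    (t • A₁ + (1 - t) • A₀).PosDef := by
  rcases ht.1.eq_or_lt with h | h
  · subst h
    simpa using hA₀
  · exact (hA₁.smul h).add_posSemidef (hA₀.posSemidef.smul (sub_nonneg.2 ht.2))

/-- The derivative of the inverse along an affine path of matrices. The entrywise sup norm on
matrices is not submultiplicative, so the derivative is computed from difference quotients, which
involve only the topology. -/
theorem hasDerivAt_segment_inv {n : ℕ} (A₀ A₁ : Matrix (Fin n) (Fin n) ℝ) {t : ℝ}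
    (ht : (t • A₁ + (1 - t) • A₀).det ≠ 0) :
    HasDerivAt (fun s : ℝ => (s • A₁ + (1 - s) • A₀)⁻¹)
      (-((t • A₁ + (1 - t) • A₀)⁻¹ * (A₁ - A₀) * (t • A₁ + (1 - t) • A₀)⁻¹)) t := by
  set C : ℝ → Matrix (Fin n) (Fin n) ℝ := fun s => s • A₁ + (1 - s) • A₀ with hC
  change (C t).det ≠ 0 at ht
  change HasDerivAt (fun s => (C s)⁻¹) (-((C t)⁻¹ * (A₁ - A₀) * (C t)⁻¹)) t
  have hcont : Continuous C := by fun_prop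
  have hdet : Continuous fun s => (C s).det := hcont.matrix_det
  have hinv : ContinuousAt (fun s => (C s)⁻¹) t := by
    simp only [Matrix.inv_def, Ring.inverse_eq_inv']
    exact (hdet.continuousAt.inv₀ ht).smul hcont.matrix_adjugate.continuousAt
  refine hasDerivAt_iff_tendsto_slope.2 ?_
  have hlim : Filter.Tendsto (fun s => -((C s)⁻¹ * (A₁ - A₀) * (C t)⁻¹)) (nhdsWithin t {t}ᶜ)
      (nhds (-((C t)⁻¹ * (A₁ - A₀) * (C t)⁻¹))) :=
    (((hinv.mul continuousAt_const).mul continuousAt_const).neg).tendsto.mono_left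
      nhdsWithin_le_nhds
  refine hlim.congr' ?_
  filter_upwards [self_mem_nhdsWithin,
    nhdsWithin_le_nhds (hdet.continuousAt.eventually_ne ht)] with s hst hs
  have hst' : s - t ≠ 0 := sub_ne_zero.2 hst
  have hunit : IsUnit (C s) ↔ IsUnit (C t) := by
    simp [Matrix.isUnit_iff_isUnit_det, hs, ht]
  have hdiff : C t - C s = -((s - t) • (A₁ - A₀)) := by
    simp only [hC]
    module
  rw [slope_def_module, Matrix.inv_sub_inv hunit, hdiff]
  simp [smul_smul, hst']

/-- Along the linear interpolation `C(t) = t·A₁ + (1−t)·A₀` of commuting positive definite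
matrices (all commuting with the positive definite weight `Λ₂`), the matrix field
`Ψ(t) = 2·C(t)⁻¹·(A₁ − A₀)·Λ₂⁻²` satisfies the Riccati-type ODE
`Ψ′(t) = −½·Ψ(t)·Λ₂²·Ψ(t)`, and `C(t)` is positive definite, for every `t ∈ [0,1]`. -/
theorem geodesic_potential_riccati (n : ℕ) (A₀ A₁ Λ₂ : Matrix (Fin n) (Fin n) ℝ)
    (hA₀ : A₀.PosDef) (hA₁ : A₁.PosDef) (hΛ₂ : Λ₂.PosDef)
    (hcomm : A₀ * A₁ = A₁ * A₀)
    (hcomm₀ : Λ₂ * A₀ = A₀ * Λ₂) (hcomm₁ : Λ₂ * A₁ = A₁ * Λ₂) :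
    ∀ t ∈ Set.Icc (0 : ℝ) 1,
      (t • A₁ + (1 - t) • A₀).PosDef ∧
      HasDerivAt
        (fun s : ℝ => (2 : ℝ) • ((s • A₁ + (1 - s) • A₀)⁻¹ * (A₁ - A₀) * (Λ₂ ^ 2)⁻¹))
        (-(1 / 2 : ℝ) •
          (((2 : ℝ) • ((t • A₁ + (1 - t) • A₀)⁻¹ * (A₁ - A₀) * (Λ₂ ^ 2)⁻¹)) * Λ₂ ^ 2 *
            ((2 : ℝ) • ((t • A₁ + (1 - t) • A₀)⁻¹ * (A₁ - A₀) * (Λ₂ ^ 2)⁻¹))))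
        t := by
  intro t ht
  have hC := posDef_segment hA₀ hA₁ ht
  refine ⟨hC, ?_⟩
  -- `X ↦ 2·X·D·Λ₂⁻²` is a linear map on a finite-dimensional space, hence continuous.
  let L : Matrix (Fin n) (Fin n) ℝ →L[ℝ] Matrix (Fin n) (Fin n) ℝ :=
    LinearMap.toContinuousLinearMap
      ((2 : ℝ) • LinearMap.mulRight ℝ ((A₁ - A₀) * (Λ₂ ^ 2)⁻¹))
  have hder := hasDerivAt_segment_inv A₀ A₁ hC.det_pos.ne'
  have hΛ : (Λ₂ ^ 2)⁻¹ * Λ₂ ^ 2 = 1 := by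
    refine Matrix.nonsing_inv_mul _ ?_
    rw [Matrix.det_pow]
    exact (pow_ne_zero 2 hΛ₂.det_pos.ne').isUnit
  have hLapply : ∀ X, L X = (2 : ℝ) • (X * ((A₁ - A₀) * (Λ₂ ^ 2)⁻¹)) := fun _ => rfl
  have hL := L.hasFDerivAt.comp_hasDerivAt t hder
  refine (hL.congr_deriv ?_).congr_of_eventuallyEq (Filter.Eventually.of_forall fun s => ?_)
  · have hcancel : ∀ X : Matrix (Fin n) (Fin n) ℝ, (Λ₂ ^ 2)⁻¹ * (Λ₂ ^ 2 * X) = X := fun X => by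
      rw [← Matrix.mul_assoc, hΛ, Matrix.one_mul]
    refine (hLapply _).trans ?_
    simp only [Matrix.smul_mul, Matrix.mul_smul, Matrix.neg_mul,
      Matrix.mul_assoc, hcancel, smul_smul]
    module
  · simp [hLapply, Matrix.mul_assoc]
end
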